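/- Norm bound for the symmetrized Sylvester equation: let 𝒜 be a unital C*-algebra, let S, T ∈ 𝒜 be self-adjoint, let m > 0 satisfy m·1 ≤ S and m·1 ≤ T, and let X, Y ∈ 𝒜 satisfy S·X + X·T = Y. Then ‖X‖ ≤ ‖Y‖ / (2m). -/

import Mathlib

/-! For `c` at least `‖S‖`, `‖T‖` and `m`, the elements `c - S` and `c - T` lie between `0` and
`(c - m) • 1`, so their norms are at most `c - m`. Since
`2c X = Y + (c - S) X + X (c - T)`, the triangle inequality gives
`2c ‖X‖ ≤ ‖Y‖ + 2 (c - m) ‖X‖`, that is `2m ‖X‖ ≤ ‖Y‖`. -/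

lemma norm_smul_one_sub_le {𝒜 : Type*} [CStarAlgebra 𝒜] [PartialOrder 𝒜] [StarOrderedRing 𝒜]
    (S : 𝒜) (hS : IsSelfAdjoint S) (m c : ℝ) (hmS : m • (1 : 𝒜) ≤ S) (hc : ‖S‖ ≤ c)
    (hmc : m ≤ c) : ‖c • (1 : 𝒜) - S‖ ≤ c - m := by
  have h1 : S ≤ c • (1 : 𝒜) := by
    rw [← Algebra.algebraMap_eq_smul_one]
    exact hS.le_algebraMap_norm_self.trans (algebraMap_mono 𝒜 hc)
  rw [CStarAlgebra.norm_le_iff_le_algebraMap _ (sub_nonneg.2 hmc) (sub_nonneg.2 h1),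
    Algebra.algebraMap_eq_smul_one, sub_smul]
  exact sub_le_sub_left hmS _

/-- Norm bound for the symmetrized Sylvester equation in a unital C*-algebra:
if `S, T` are self-adjoint with `m • 1 ≤ S`, `m • 1 ≤ T`, `m > 0`, and
`S * X + X * T = Y`, then `‖X‖ ≤ ‖Y‖ / (2m)`. -/
theorem sylvester_solution_norm_bound {𝒜 : Type*} [CStarAlgebra 𝒜] [PartialOrder 𝒜]
    [StarOrderedRing 𝒜]
    (S T : 𝒜) (hS : IsSelfAdjoint S) (hT : IsSelfAdjoint T)
    (m : ℝ) (hm : 0 < m) (hmS : m • (1 : 𝒜) ≤ S) (hmT : m • (1 : 𝒜) ≤ T)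
    (X Y : 𝒜) (hXY : S * X + X * T = Y) :
    ‖X‖ ≤ ‖Y‖ / (2 * m) := by
  obtain ⟨c, hcS, hcT, hcm⟩ : ∃ c : ℝ, ‖S‖ ≤ c ∧ ‖T‖ ≤ c ∧ m ≤ c :=
    ⟨‖S‖ + ‖T‖ + m, by linarith [norm_nonneg T], by linarith [norm_nonneg S],
      by linarith [norm_nonneg S, norm_nonneg T]⟩
  have h1 := norm_smul_one_sub_le S hS m c hmS hcS hcm
  have h2 := norm_smul_one_sub_le T hT m c hmT hcT hcm
  have key : (2 * c) • X = Y + (c • (1 : 𝒜) - S) * X + X * (c • (1 : 𝒜) - T) := by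
    rw [← hXY, sub_mul, mul_sub, smul_mul_assoc, mul_smul_comm, one_mul, mul_one, two_mul,
      add_smul]
    abel
  have hn : 2 * c * ‖X‖ ≤ ‖Y‖ + (c - m) * ‖X‖ + ‖X‖ * (c - m) := by
    calc 2 * c * ‖X‖ = ‖(2 * c) • X‖ := by
          rw [norm_smul, Real.norm_of_nonneg (by linarith)]
      _ ≤ ‖Y‖ + ‖(c • (1 : 𝒜) - S) * X‖ + ‖X * (c • (1 : 𝒜) - T)‖ := by
          rw [key]; exact norm_add₃_le
      _ ≤ ‖Y‖ + (c - m) * ‖X‖ + ‖X‖ * (c - m) := by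
          gcongr
          · exact (norm_mul_le _ _).trans (by gcongr)
          · exact (norm_mul_le _ _).trans (by gcongr)
  rw [le_div_iff₀ (by positivity)]
  linarith
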